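/- arXiv:1206.3396 — 13 statements merged into one kernel-verified Lean document; each statement's English description precedes it below -/
import Mathlib

section
/- Let R be a semiprime ring, let σ be a ring automorphism of R, let n ≥ 3, and let Δ : Rⁿ → R be a skew n-derivation with respect to σ. Then Δ maps into the center of R, i.e., Δ(x₁,…,xₙ) ∈ Z(R) for all x₁,…,xₙ ∈ R. -/
/-!
Only three arguments matter, so the remaining ones are frozen and the proof concerns a map
`D x y z`. Expanding `B (x * u) (y * v)` in two ways for a skew biderivation `B` gives
`B x y * w * [u, v] = σ ([x, y] * w) * B u v` (`skew_biderivation_identity`). Applied to the first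
and third arguments of `D`, it shows that `D x y x` annihilates every `w * [u, v]`; applied to the
first and second arguments and combined with the Leibniz rule in `z`, it then yields
`D x y z * [x, w * [u, v]] = 0`. Hence `D x y z * g * [x, h] = 0` for every `g` in the
commutator ideal. Linearizing in `x` and using semiprimeness twice removes first the `x` from the
commutator and then the `g`, so that `D x y z * w * [u, v] = 0` for all `w, u, v`
(`skew_triderivation_annihilates`). In a semiprime ring every element with this property is
central (`mem_center_of_annihilates`).
-/

/-- `Δ` is a skew `n`-derivation with respect to the automorphism `σ`:
in each argument it is additive and satisfies the `σ`-Leibniz rule. -/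
def IsSkewNDerivation {R : Type*} [Ring R] {n : ℕ} (σ : R ≃+* R)
    (Δ : (Fin n → R) → R) : Prop :=
  (∀ (i : Fin n) (v : Fin n → R) (x y : R),
      Δ (Function.update v i (x + y)) =
        Δ (Function.update v i x) + Δ (Function.update v i y)) ∧
  (∀ (i : Fin n) (v : Fin n → R) (x y : R),
      Δ (Function.update v i (x * y)) =
        Δ (Function.update v i x) * y + σ x * Δ (Function.update v i y))

theorem skew_biderivation_identity {R : Type*} [Ring R] (σ : R ≃+* R) (B : R → R → R)
    (h1 : ∀ x y z, B (x * y) z = B x z * y + σ x * B y z)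
    (h2 : ∀ z x y, B z (x * y) = B z x * y + σ x * B z y) (x y w u v : R) :
    B x y * w * (u * v - v * u) = σ ((x * y - y * x) * w) * B u v := by
  have key : ∀ u v, B x y * (u * v - v * u) = σ (x * y - y * x) * B u v := by
    intro u v
    have e : B (x * u) (y * v) = B (x * u) (y * v) := rfl
    conv_lhs at e => rw [h1, h2, h2]
    conv_rhs at e => rw [h2, h1, h1]
    rw [map_sub, map_mul, map_mul]
    linear_combination (norm := noncomm_ring) -e
  have e1 := key u (w * v)
  have e2 := key u w
  rw [h2] at e1
  rw [map_mul]
  have e3 : B x y * (u * w - w * u) * v = σ (x * y - y * x) * B u w * v := by rw [e2]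
  linear_combination (norm := noncomm_ring) e1 - e3

theorem mem_center_of_annihilates {R : Type*} [Ring R]
    (hsemiprime : ∀ a : R, (∀ x : R, a * x * a = 0) → a = 0) (a : R)
    (ha : ∀ w u v, a * w * (u * v - v * u) = 0) : a ∈ Set.center R := by
  rw [Semigroup.mem_center_iff]
  intro r
  refine (sub_eq_zero.1 (hsemiprime _ fun t => ?_)).symm
  have e1 := ha (r * t) a r
  have e2 : r * (a * t * (a * r - r * a)) = 0 := by rw [ha, mul_zero]
  linear_combination (norm := noncomm_ring) e1 - e2

/-- The commutator-ideal argument for a skew 3-derivation; additivity is needed only in the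
first variable, where the linearization takes place. -/
theorem skew_triderivation_annihilates {R : Type*} [Ring R]
    (hsemiprime : ∀ a : R, (∀ x : R, a * x * a = 0) → a = 0)
    (σ : R ≃+* R) (D : R → R → R → R)
    (hadd : ∀ x x' y z, D (x + x') y z = D x y z + D x' y z)
    (h1 : ∀ x x' y z, D (x * x') y z = D x y z * x' + σ x * D x' y z)
    (h2 : ∀ x y y' z, D x (y * y') z = D x y z * y' + σ y * D x y' z)
    (h3 : ∀ x y z z', D x y (z * z') = D x y z * z' + σ z * D x y z')
    (x y z w u v : R) : D x y z * w * (u * v - v * u) = 0 := by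
  have B12 : ∀ x y z w u v : R,
      D x y z * w * (u * v - v * u) = σ ((x * y - y * x) * w) * D u v z := fun x y z w u v =>
    skew_biderivation_identity σ (fun a b => D a b z) (fun a b c => h1 a b c z)
      (fun a b c => h2 a b c z) x y w u v
  have diag : ∀ x y w u v : R, D x y x * w * (u * v - v * u) = 0 := fun x y w u v => by
    have e := skew_biderivation_identity σ (fun a b => D a y b) (fun a b c => h1 a b y c)
      (fun a b c => h3 a y b c) x x w u v
    simpa using e
  have comm : ∀ x y z w u v : R,
      D x y z * (x * (w * (u * v - v * u)) - w * (u * v - v * u) * x) = 0 := by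
    intro x y z w u v
    have e1 := B12 x y (z * x) w u v
    have e2 : D x y z * w * (u * v - v * u) * x = σ ((x * y - y * x) * w) * D u v z * x := by
      rw [B12]
    have e3 : σ ((x * y - y * x) * w) * σ z * D u v x = 0 := by
      rw [← map_mul, mul_assoc, ← B12, diag]
    have e5 : σ z * (D x y x * w * (u * v - v * u)) = 0 := by rw [diag, mul_zero]
    rw [h3, h3] at e1
    linear_combination (norm := noncomm_ring) e1 - e2 - e5 + e3
  -- The elements `g = r * [u, v] * s` generate the commutator ideal as an additive group; since
  -- `D x y z` kills both `[x, g]` and `[x, g * h]`, it kills `g * [x, h]`.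
  have split : ∀ x y z r u v s h : R,
      D x y z * (r * (u * v - v * u) * s) * (x * h - h * x) = 0 := by
    intro x y z r u v s h
    -- `r * [u, v] * s = r * [u, v * s] - (r * v) * [u, s]`
    have ideal : ∀ s : R, D x y z * (x * (r * (u * v - v * u) * s)
        - r * (u * v - v * u) * s * x) = 0 := by
      intro s
      have e1 := comm x y z r u (v * s)
      have e2 := comm x y z (r * v) u s
      linear_combination (norm := noncomm_ring) e1 - e2
    have e1 := ideal (s * h)
    have e2 : D x y z * (x * (r * (u * v - v * u) * s)
        - r * (u * v - v * u) * s * x) * h = 0 := by rw [ideal, zero_mul]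
    linear_combination (norm := noncomm_ring) e1 - e2
  have lin : ∀ x x' y z r u v s h : R,
      D x y z * (r * (u * v - v * u) * s) * (x' * h - h * x')
        = -(D x' y z * (r * (u * v - v * u) * s) * (x * h - h * x)) := by
    intro x x' y z r u v s h
    have e := split (x + x') y z r u v s h
    have e1 := split x y z r u v s h
    have e2 := split x' y z r u v s h
    rw [hadd] at e
    generalize r * (u * v - v * u) * s = g at *
    linear_combination (norm := noncomm_ring) e - e1 - e2
  have free : ∀ x x' y z r u v s h : R,
      D x y z * (r * (u * v - v * u) * s) * (x' * h - h * x') = 0 := by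
    intro x x' y z r u v s h
    refine hsemiprime _ fun k => ?_
    -- The middle part of `P * k * P` lies in the commutator ideal, so `lin` exchanges the outer
    -- `x` and `x'`; the result begins with the left-hand side of `split` at `x'`.
    have e := lin x x' y z r u v
      (s * (x' * h - h * x') * k * D x y z * (r * (u * v - v * u) * s)) h
    have e2 := split x' y z r u v s h
    generalize x' * h - h * x' = c at *
    generalize u * v - v * u = d at *
    calc _ = D x y z * (r * d * (s * c * k * D x y z * (r * d * s))) * c := by
          simp only [mul_assoc]
      _ = -(D x' y z * (r * d * s) * c * (k * D x y z * (r * d * s) * (x * h - h * x))) := by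
          rw [e]; simp only [mul_assoc]
      _ = 0 := by rw [e2, zero_mul, neg_zero]
  refine hsemiprime _ fun k => ?_
  have e := free x u y z w u v (k * D x y z * w) v
  simpa only [mul_assoc] using e

theorem skew_n_derivation_maps_into_center
    {R : Type*} [Ring R]
    (hsemiprime : ∀ a : R, (∀ x : R, a * x * a = 0) → a = 0)
    (σ : R ≃+* R) {n : ℕ} (hn : 3 ≤ n)
    (Δ : (Fin n → R) → R) (hΔ : IsSkewNDerivation σ Δ) :
    ∀ v : Fin n → R, Δ v ∈ Set.center R := by
  obtain ⟨hadd, hmul⟩ := hΔ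
  intro v
  let i : Fin n := ⟨0, by omega⟩
  let j : Fin n := ⟨1, by omega⟩
  let k : Fin n := ⟨2, by omega⟩
  have hij : i ≠ j := by simp [i, j]
  have hik : i ≠ k := by simp [i, k]
  have hjk : j ≠ k := by simp [j, k]
  let D : R → R → R → R := fun x y z =>
    Δ (Function.update (Function.update (Function.update v i x) j y) k z)
  -- Each of the first two updates can be moved to the outermost position.
  have Dj : ∀ x y z, D x y z =
      Δ (Function.update (Function.update (Function.update v i x) k z) j y) := fun x y z => by
    simp only [D]; rw [Function.update_comm hjk]
  have Di : ∀ x y z, D x y z =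
      Δ (Function.update (Function.update (Function.update v j y) k z) i x) := fun x y z => by
    simp only [D]; rw [Function.update_comm hij, Function.update_comm hik]
  have hD : Δ v = D (v i) (v j) (v k) := by simp [D]
  rw [hD]
  refine mem_center_of_annihilates hsemiprime _
    (skew_triderivation_annihilates hsemiprime σ D ?_ ?_ ?_ ?_ _ _ _)
  · intro x x' y z
    simp only [Di, hadd]
  · intro x x' y z
    simp only [Di, hmul]
  · intro x y y' z
    simp only [Dj, hmul]
  · intro x y z z'
    simp only [D, hmul]
end

section
/- Let R be a semiprime ring, let σ be a ring automorphism of R, and let Δ : R × R × R → R be a skew 3-derivation with respect to σ. Then Δ(x, y, z) ∈ Z(R) for all x, y, z ∈ R. -/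
/-!
Writing `[a, b] = a * b - b * a`, expanding `B (x * y) (z * w)` in two orders for a skew biderivation
`B` gives `B x z * [y, w] = [σ x, σ z] * B y w`, and then, replacing `y` by `u * y`,
`B x z * u * [y, w] = [σ x, σ z] * σ u * B y w` (`biderivation_identity`).

For the skew biderivation `Δ · w ·`, taking equal outer arguments kills the right-hand side, so
`Δ y w y * R * [R, R] = 0`, and by semiprimeness also `[R, R] * R * Δ y w y = 0`. The identity for
`Δ · · y` then reads `Δ x z y * R * [y, w] = 0`. Linearizing in `y` and using semiprimeness again
gives `Δ x z y * R * [R, R] = 0`, and an element `d` with `d * R * [R, R] = 0` is central because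
`[d, r] * R * [d, r] = 0`.
-/

/-- Commutators on one side of a skew biderivation can be traded for commutators on the other. -/
theorem biderivation_identity {R : Type*} [Ring R] (σ : R ≃+* R) (B : R → R → R)
    (hmul1 : ∀ x y c : R, B (x * y) c = B x c * y + σ x * B y c)
    (hmul2 : ∀ a x y : R, B a (x * y) = B a x * y + σ x * B a y) (x z u y w : R) :
    B x z * u * (y * w - w * y) = (σ x * σ z - σ z * σ x) * σ u * B y w := by
  have key : ∀ y w : R, B x z * (y * w - w * y) = (σ x * σ z - σ z * σ x) * B y w := by
    intro y w
    have h1 : B (x * y) (z * w) = (B x z * w + σ z * B x w) * y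
        + σ x * (B y z * w + σ z * B y w) := by rw [hmul1, hmul2, hmul2]
    have h2 : B (x * y) (z * w) = (B x z * y + σ x * B y z) * w
        + σ z * (B x w * y + σ x * B y w) := by rw [hmul2, hmul1, hmul1]
    have h := sub_eq_zero.mpr (h2.symm.trans h1)
    rw [← sub_eq_zero, ← h]
    noncomm_ring
  have h1 := key (u * y) w
  rw [hmul1] at h1
  calc _ = B x z * (u * y * w - w * (u * y)) - B x z * (u * w - w * u) * y := by noncomm_ring
    _ = (σ x * σ z - σ z * σ x) * (B u w * y + σ u * B y w)
        - (σ x * σ z - σ z * σ x) * B u w * y := by rw [h1, key u w]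
    _ = _ := by noncomm_ring

theorem skew_3_derivation_maps_into_center
    {R : Type*} [Ring R]
    (hsemiprime : ∀ a : R, (∀ x : R, a * x * a = 0) → a = 0)
    (σ : R ≃+* R) (Δ : R → R → R → R)
    (hadd1 : ∀ x y b c : R, Δ (x + y) b c = Δ x b c + Δ y b c)
    (hadd2 : ∀ a x y c : R, Δ a (x + y) c = Δ a x c + Δ a y c)
    (hadd3 : ∀ a b x y : R, Δ a b (x + y) = Δ a b x + Δ a b y)
    (hmul1 : ∀ x y b c : R, Δ (x * y) b c = Δ x b c * y + σ x * Δ y b c)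
    (hmul2 : ∀ a x y c : R, Δ a (x * y) c = Δ a x c * y + σ x * Δ a y c)
    (hmul3 : ∀ a b x y : R, Δ a b (x * y) = Δ a b x * y + σ x * Δ a b y) :
    ∀ x y z : R, Δ x y z ∈ Set.center R := by
  have hdiag : ∀ y w u p q : R, Δ y w y * u * (p * q - q * p) = 0 := by
    intro y w u p q
    have h := biderivation_identity σ (fun a c => Δ a w c) (fun x y c => hmul1 x y w c)
      (fun a x y => hmul3 a w x y) y y u p q
    simpa using h
  have hdiag' : ∀ y w u p q : R, (p * q - q * p) * u * Δ y w y = 0 := by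
    intro y w u p q
    apply hsemiprime
    intro v
    calc _ = (p * q - q * p) * u * (Δ y w y * v * (p * q - q * p)) * u * Δ y w y := by
          simp only [mul_assoc]
      _ = 0 := by simp [hdiag]
  have hrep : ∀ x z y u w : R, Δ x z y * u * (y * w - w * y) = 0 := by
    intro x z y u w
    rw [biderivation_identity σ (fun a b => Δ a b y) (fun a b c => hmul1 a b c y)
      (fun a b c => hmul2 a b c y) x z u y w]
    exact hdiag' y w (σ u) (σ x) (σ z)
  have hall : ∀ x z y u p w : R, Δ x z y * u * (p * w - w * p) = 0 := by
    intro x z y u p w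
    have hlin : ∀ v, Δ x z y * v * (p * w - w * p) = -(Δ x z p * v * (y * w - w * y)) := by
      intro v
      have h := hrep x z (y + p) v w
      have h1 := hrep x z y v w
      have h2 := hrep x z p v w
      rw [hadd3] at h
      rw [eq_neg_iff_add_eq_zero]
      calc _ = (Δ x z y + Δ x z p) * v * ((y + p) * w - w * (y + p))
            - Δ x z y * v * (y * w - w * y) - Δ x z p * v * (p * w - w * p) := by noncomm_ring
        _ = 0 := by rw [h, h1, h2]; simp
    apply hsemiprime
    intro v
    -- Linearizing only the last commutator exposes `Δ x z y * R * [y, w] = 0`.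
    calc _ = Δ x z y * u * (p * w - w * p) * v * -(Δ x z p * u * (y * w - w * y)) := by
          rw [← hlin u]
      _ = -(Δ x z y * (u * (p * w - w * p) * v * Δ x z p * u) * (y * w - w * y)) := by
          simp only [mul_neg, mul_assoc]
      _ = 0 := by rw [hrep, neg_zero]
  intro x y z
  rw [Semigroup.mem_center_iff]
  intro r
  symm
  rw [← sub_eq_zero]
  apply hsemiprime
  intro v
  have h1 := hall x y z (r * v) (Δ x y z) r
  have h2 := hall x y z v (Δ x y z) r
  calc _ = Δ x y z * (r * v) * (Δ x y z * r - r * Δ x y z)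
        - r * (Δ x y z * v * (Δ x y z * r - r * Δ x y z)) := by noncomm_ring
    _ = 0 := by rw [h1, h2]; simp
end

section
/- Let R be a prime ring admitting a nonzero skew n-derivation with respect to some ring automorphism σ of R, where n ≥ 3. Then R is commutative. -/
/-- The case `t = 1` is the expansion of `f (x * u) (y * v)` in two ways; the general case follows
from it by comparing `t * u` with `t` in place of `u`. -/
theorem leibniz_pair_identity {R : Type*} [Ring R] (σ : R ≃+* R) (f : R → R → R)
    (h1 : ∀ x u y, f (x * u) y = f x y * u + σ x * f u y)
    (h2 : ∀ x y v, f x (y * v) = f x y * v + σ y * f x v) (x y t u v : R) :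
    f x y * t * (u * v - v * u) = (σ x * σ y - σ y * σ x) * σ t * f u v := by
  have key : ∀ u, f x y * (u * v - v * u) = (σ x * σ y - σ y * σ x) * f u v := by
    intro u
    have e : f (x * u) (y * v) = f (x * u) (y * v) := rfl
    conv_lhs at e => rw [h1, h2, h2]
    conv_rhs at e => rw [h2, h1, h1]
    rw [← sub_eq_zero] at e ⊢
    rw [← neg_eq_zero, ← e]
    noncomm_ring
  have kt := key t
  have ktu := key (t * u)
  rw [h1] at ktu
  calc f x y * t * (u * v - v * u)
      = f x y * (t * u * v - v * (t * u)) - f x y * (t * v - v * t) * u := by noncomm_ring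
    _ = (σ x * σ y - σ y * σ x) * σ t * f u v := by rw [ktu, kt]; noncomm_ring

/-- The case of three arguments: in a noncommutative prime ring, a map satisfying the `σ`-Leibniz
rule in each of three arguments and additive in the last one is zero. -/
theorem skew_three_eq_zero {R : Type*} [Ring R]
    (hprime : ∀ a b : R, (∀ x : R, a * x * b = 0) → a = 0 ∨ b = 0)
    (σ : R ≃+* R) (D : R → R → R → R)
    (h1 : ∀ x u y z, D (x * u) y z = D x y z * u + σ x * D u y z)
    (h2 : ∀ x y v z, D x (y * v) z = D x y z * v + σ y * D x v z)
    (h3 : ∀ x y z w, D x y (z * w) = D x y z * w + σ z * D x y w)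
    (hadd : ∀ x y z w, D x y (z + w) = D x y z + D x y w)
    {p q : R} (hpq : p * q ≠ q * p) (u v w : R) : D u v w = 0 := by
  have halt : ∀ x y, D x y x = 0 := by
    intro x y
    refine (hprime _ (p * q - q * p) fun t => ?_).resolve_right (sub_ne_zero.2 hpq)
    rw [leibniz_pair_identity σ (fun a b => D a y b) (fun a b c => h1 a b y c)
      (fun a b c => h3 a y b c) x x t p q]
    simp
  have hnc : ∀ x y, x * y ≠ y * x → D u v x = 0 := by
    intro x y hxy
    refine (hprime (σ x * σ y - σ y * σ x) _ fun s => ?_).resolve_left ?_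
    · obtain ⟨t, rfl⟩ := σ.surjective s
      rw [← leibniz_pair_identity σ (fun a b => D a b x) (fun a b c => h1 a b c x)
        (fun a b c => h2 a b c x) x y t u v]
      simp [halt]
    · rw [sub_eq_zero, ← map_mul, ← map_mul]
      exact fun h => hxy (σ.injective h)
  by_cases hw : w * q = q * w
  · -- `w + p` does not commute with `q`, so `D u v` vanishes at both `w + p` and `p`.
    have h := hnc (w + p) q (by
      rw [add_mul, mul_add, hw]
      exact fun h => hpq (add_left_cancel h))
    rwa [hadd, hnc p q hpq, add_zero] at h
  · exact hnc w q hw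


theorem prime_with_nonzero_skew_n_derivation_commutative
    {R : Type*} [Ring R]
    (hprime : ∀ a b : R, (∀ x : R, a * x * b = 0) → a = 0 ∨ b = 0)
    (σ : R ≃+* R) {n : ℕ} (hn : 3 ≤ n)
    (Δ : (Fin n → R) → R) (hΔ : IsSkewNDerivation σ Δ)
    (hΔne : ∃ v : Fin n → R, Δ v ≠ 0) :
    ∀ x y : R, x * y = y * x := by
  by_contra! hcomm
  obtain ⟨p, q, hpq⟩ := hcomm
  obtain ⟨v, hv⟩ := hΔne
  obtain ⟨hadd, hmul⟩ := hΔ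
  let i : Fin n := ⟨0, by omega⟩
  let j : Fin n := ⟨1, by omega⟩
  let k : Fin n := ⟨2, by omega⟩
  have hij : i ≠ j := by simp [i, j]
  have hik : i ≠ k := by simp [i, k]
  have hjk : j ≠ k := by simp [j, k]
  apply hv
  have h := skew_three_eq_zero hprime σ
    (fun x y z => Δ (Function.update (Function.update (Function.update v i x) j y) k z))
    (fun x u y z => by
      -- Move the update at `i` outermost.
      have e : ∀ a, Function.update (Function.update (Function.update v i a) j y) k z =
          Function.update (Function.update (Function.update v j y) k z) i a := fun a => by
        rw [Function.update_comm hij, Function.update_comm hik]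
      simp only [e, hmul])
    (fun x y u z => by
      have e : ∀ a, Function.update (Function.update (Function.update v i x) j a) k z =
          Function.update (Function.update (Function.update v i x) k z) j a := fun a => by
        rw [Function.update_comm hjk]
      simp only [e, hmul])
    (fun x y z w => hmul _ _ _ _) (fun x y z w => hadd _ _ _ _) hpq (v i) (v j) (v k)
  simpa using h
end

section
/- Let R be a semiprime ring and a ∈ R. Then [a,[a,x]] = 0 holds for all x ∈ R if and only if a² ∈ Z(R) and 2a ∈ Z(R). -/
/-! Write `d x = [a, x]`, a derivation. If `d ∘ d = 0`, expanding `d (d (x * y))` by the Leibniz rule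
gives `2 * (d x * d y) = 0`; replacing `y` by `y * x` gives `2 * (d x * y * d x) = 0`, so `2 * d x`
vanishes by semiprimeness, that is, `2 * a` is central. Then
`d (d x) = a ^ 2 * x - 2 * a * x * a + x * a ^ 2` reduces to `a ^ 2 * x - x * a ^ 2`, so `a ^ 2` is
central. The same reduction gives the converse. -/

/-- The commutator `[a, b] = a * b - b * a`. -/
def lieBr {R : Type*} [Ring R] (a b : R) : R := a * b - b * a

theorem stmt4 {R : Type*} [Ring R]
    (hsemiprime : ∀ a : R, (∀ x : R, a * x * a = 0) → a = 0) (a : R) :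
    (∀ x : R, lieBr a (lieBr a x) = 0) ↔
      (a ^ 2 ∈ Set.center R ∧ 2 * a ∈ Set.center R) := by
  simp only [Semigroup.mem_center_iff, lieBr]
  constructor
  · intro h
    have h1 (x y : R) : 2 * ((a * x - x * a) * (a * y - y * a)) = 0 := by
      linear_combination (norm := noncomm_ring) h (x * y) - h x * y - x * h y
    have h2 (x y : R) : 2 * ((a * x - x * a) * y * (a * x - x * a)) = 0 := by
      linear_combination (norm := noncomm_ring) h1 x (y * x) - h1 x y * x
    have h3 (x : R) : 2 * (a * x - x * a) = 0 := by
      apply hsemiprime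
      intro y
      linear_combination (norm := noncomm_ring) 2 * h2 x y
    refine ⟨fun x => ?_, fun x => ?_⟩
    · linear_combination (norm := noncomm_ring) -h x - h3 x * a
    · linear_combination (norm := noncomm_ring) -h3 x
  · rintro ⟨h1, h2⟩ x
    linear_combination (norm := noncomm_ring) -h1 x + h2 x * a
end

section
/- Let R be a ring and a, b ∈ R such that [a,[b,x]] = 0 for all x ∈ R. Then [a,x][b,y] + [b,x][a,y] = 0 for all x, y ∈ R. -/
theorem stmt6 {R : Type*} [Ring R] (a b : R)
    (h : ∀ x : R, lieBr a (lieBr b x) = 0) :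
    ∀ x y : R, lieBr a x * lieBr b y + lieBr b x * lieBr a y = 0 := by
  intro x y
  -- Both `[a, ·]` and `[b, ·]` are derivations, so this is the Leibniz rule for their composite.
  have key : lieBr a x * lieBr b y + lieBr b x * lieBr a y =
      lieBr a (lieBr b (x * y)) - lieBr a (lieBr b x) * y - x * lieBr a (lieBr b y) := by
    unfold lieBr
    noncomm_ring
  rw [key, h, h, h]
  simp
end

section
/- Let R be a ring and a, b ∈ R such that [a,[b,x]] = 0 for all x ∈ R. Then [a,x]·z·[b,y] + [b,x]·z·[a,y] = 0 for all x, y, z ∈ R. -/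
/-- Since `[a, ·]` and `[b, ·]` are derivations whose composite vanishes, applying the composite
to the product `x * y` leaves only the two cross terms. -/
theorem lieBr_cross {R : Type*} [Ring R] (a b : R)
    (h : ∀ x : R, lieBr a (lieBr b x) = 0) (x y : R) :
    lieBr a x * lieBr b y + lieBr b x * lieBr a y = 0 := by
  have key : lieBr a x * lieBr b y + lieBr b x * lieBr a y
      = lieBr a (lieBr b (x * y)) - x * lieBr a (lieBr b y) - lieBr a (lieBr b x) * y := by
    simp only [lieBr]
    noncomm_ring
  rw [key, h, h, h]
  simp

theorem stmt7 {R : Type*} [Ring R] (a b : R)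
    (h : ∀ x : R, lieBr a (lieBr b x) = 0) :
    ∀ x y z : R, lieBr a x * z * lieBr b y + lieBr b x * z * lieBr a y = 0 := by
  intro x y z
  -- Expand the cross-term identity for the pair `(x, z * y)` by the Leibniz rule.
  have key : lieBr a x * z * lieBr b y + lieBr b x * z * lieBr a y
      = (lieBr a x * lieBr b (z * y) + lieBr b x * lieBr a (z * y))
        - (lieBr a x * lieBr b z + lieBr b x * lieBr a z) * y := by
    simp only [lieBr]
    noncomm_ring
  rw [key, lieBr_cross a b h, lieBr_cross a b h]
  simp
end

section
/- Let R be a semiprime ring and a, b ∈ R such that [[a,x],[b,x]] = 0 for all x ∈ R. Then [a,b] = 0. -/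
/-- The Leibniz rule applied to `[c, [a, x * y]] = 0`. -/
lemma leibniz_of_comm_lieBr {R : Type*} [Ring R] {a c : R}
    (hc : ∀ x : R, lieBr c (lieBr a x) = 0) (x y : R) :
    lieBr a x * lieBr c y + lieBr c x * lieBr a y = 0 := by
  have h₁ := hc (x * y)
  have h₂ := hc x
  have h₃ := hc y
  simp only [lieBr] at *
  linear_combination (norm := noncomm_ring) h₁ - h₂ * y - x * h₃

/-- In a semiprime ring, an element commuting with all `[a, x]` commutes with `a`. -/
lemma comm_of_comm_lieBr {R : Type*} [Ring R]
    (hsemiprime : ∀ a : R, (∀ x : R, a * x * a = 0) → a = 0) {a c : R}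
    (hc : ∀ x : R, lieBr c (lieBr a x) = 0) : lieBr c a = 0 := by
  have hl : ∀ x : R, lieBr a x * lieBr c a = 0 := fun x => by
    have h₁ := leibniz_of_comm_lieBr hc x a
    have h₂ : lieBr a a = 0 := sub_self _
    simpa [h₂] using h₁
  apply hsemiprime
  intro z
  -- `[a, c * z] = -[c, a] * z + c * [a, z]`, and `[c, a]` on the right kills the last term.
  have h₁ := hl (c * z)
  have h₂ := hl z
  simp only [lieBr] at *
  linear_combination (norm := noncomm_ring) c * h₂ - h₁

theorem stmt8 {R : Type*} [Ring R]
    (hsemiprime : ∀ a : R, (∀ x : R, a * x * a = 0) → a = 0) (a b : R)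
    (h : ∀ x : R, lieBr (lieBr a x) (lieBr b x) = 0) :
    lieBr a b = 0 := by
  have hca : ∀ x : R, lieBr (lieBr a b) (lieBr a x) = 0 := fun x => by
    have h₁ := h (x + a)
    have h₂ := h x
    simp only [lieBr] at *
    linear_combination (norm := noncomm_ring) h₁ - h₂
  have hcb : ∀ x : R, lieBr (lieBr a b) (lieBr b x) = 0 := fun x => by
    have h₁ := h (x + b)
    have h₂ := h x
    simp only [lieBr] at *
    linear_combination (norm := noncomm_ring) h₁ - h₂
  have hb := comm_of_comm_lieBr hsemiprime hcb
  have hl := fun x => leibniz_of_comm_lieBr hca x b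
  have hba := h (b * a)
  have hc : lieBr a b = a * b - b * a := rfl
  generalize lieBr a b = c at *
  have hkill : ∀ x : R, lieBr c x * c = 0 := fun x => by simpa [hb] using hl x
  have hcentral : ∀ x : R, lieBr c x = 0 := fun x => by
    apply hsemiprime
    intro z
    -- `[c, x * z] * c = 0` gives `[c, x] * z * c = 0`, hence `[c, x] * z * [c, x] = 0`.
    have h₁ := hkill (x * z)
    have h₂ := hkill z
    have h₃ := hkill (x * (z * x))
    have h₄ := hkill (z * x)
    simp only [lieBr] at *
    linear_combination (norm := noncomm_ring) (h₁ - x * h₂) * x - (h₃ - x * h₄)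
  have hcomm : ∀ x : R, c * x = x * c := fun x => sub_eq_zero.mp (hcentral x)
  -- `[[a, b * a], [b, b * a]] = [c * a, -(c * b)] = -(c ^ 3)`.
  have hcube : c * c * c = 0 := by
    have h₁ : lieBr a (b * a) = c * a := by rw [hc, lieBr]; noncomm_ring
    have h₂ : lieBr b (b * a) = -(c * b) := by rw [hcomm b, hc, lieBr]; noncomm_ring
    rw [h₁, h₂, lieBr] at hba
    have h₃ := hcomm a
    have h₄ := hcomm b
    have h₅ : c * a * (c * b) = c * c * (a * b) := by
      rw [mul_assoc c a, ← mul_assoc a c b, ← h₃]; noncomm_ring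
    have h₆ : c * b * (c * a) = c * c * (b * a) := by
      rw [mul_assoc c b, ← mul_assoc b c a, ← h₄]; noncomm_ring
    have h₇ : c * c * c = c * c * (a * b) - c * c * (b * a) := by
      rw [← mul_sub, ← hc]
    rw [h₇, ← h₅, ← h₆]
    linear_combination (norm := noncomm_ring) -hba
  have hsq : c * c = 0 := by
    apply hsemiprime
    intro x
    rw [mul_assoc c c x, hcomm x, mul_assoc, mul_assoc x, ← mul_assoc c c c, hcube]
    simp
  apply hsemiprime
  intro x
  rw [hcomm x, mul_assoc, hsq, mul_zero]
end

section
/- Let R be a ring and a, b ∈ R such that [[a,x],[b,x]] = 0 for all x ∈ R. Then [b,x]·[[a,b],b] = 0 for all x ∈ R. -/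
/-- Replacing `x` by `x + b` in the hypothesis leaves `[b, x]` fixed and adds `[a, b]` to
`[a, x]`, so `[a, b]` commutes with every `[b, x]`. -/
theorem lieBr_lieBr_eq_zero {R : Type*} [Ring R] (a b : R)
    (h : ∀ x : R, lieBr (lieBr a x) (lieBr b x) = 0) (x : R) :
    lieBr (lieBr a b) (lieBr b x) = 0 := by
  have e : lieBr (lieBr a b) (lieBr b x) =
      lieBr (lieBr a (x + b)) (lieBr b (x + b)) - lieBr (lieBr a x) (lieBr b x) := by
    simp only [lieBr]; noncomm_ring
  rw [e, h, h, sub_zero]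

theorem stmt10 {R : Type*} [Ring R] (a b : R)
    (h : ∀ x : R, lieBr (lieBr a x) (lieBr b x) = 0) :
    ∀ x : R, lieBr b x * lieBr (lieBr a b) b = 0 := by
  intro x
  -- Leibniz rule for `[[a, b], ·]` applied to `[b, x * b] = [b, x] * b`.
  have e : lieBr b x * lieBr (lieBr a b) b =
      lieBr (lieBr a b) (lieBr b (x * b)) - lieBr (lieBr a b) (lieBr b x) * b := by
    simp only [lieBr]; noncomm_ring
  rw [e, lieBr_lieBr_eq_zero a b h, lieBr_lieBr_eq_zero a b h, zero_mul, sub_zero]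
end

section
/- Let R be a semiprime ring and a, b ∈ R such that [[a,x],[b,x]] = 0 for all x ∈ R. Then [[a,b],b] = 0. -/
theorem stmt11 {R : Type*} [Ring R]
    (hsemiprime : ∀ a : R, (∀ x : R, a * x * a = 0) → a = 0) (a b : R)
    (h : ∀ x : R, lieBr (lieBr a x) (lieBr b x) = 0) :
    lieBr (lieBr a b) b = 0 := by
  have hcomm : ∀ x : R, lieBr (lieBr a b) (lieBr b x) = 0 := by
    intro x
    have e : lieBr (lieBr a b) (lieBr b x) =
        lieBr (lieBr a (x + b)) (lieBr b (x + b)) - lieBr (lieBr a x) (lieBr b x) := by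
      simp only [lieBr]; noncomm_ring
    rw [e, h, h, sub_zero]
  generalize lieBr a b = c at hcomm ⊢
  have hmul : ∀ x : R, lieBr b x * lieBr c b = 0 := by
    intro x
    have e : lieBr b x * lieBr c b =
        lieBr c (lieBr b (x * b)) - lieBr c (lieBr b x) * b := by
      simp only [lieBr]; noncomm_ring
    rw [e, hcomm, hcomm, zero_mul, sub_zero]
  apply hsemiprime
  intro x
  have e : lieBr c b * x * lieBr c b =
      c * (lieBr b x * lieBr c b) - lieBr b (c * x) * lieBr c b := by
    simp only [lieBr]; noncomm_ring
  rw [e, hmul, hmul, mul_zero, sub_zero]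
end

section
/- Let R be a semiprime ring and a, b ∈ R such that [[a,x],[b,x]] = 0 for all x ∈ R. Then [a,b] ∈ Z(R). -/
theorem lieBr_mul_mul_lieBr {R : Type*} [Ring R] {a c : R}
    (hc : ∀ x : R, lieBr c (lieBr a x) = 0) (x y z : R) :
    lieBr a x * y * lieBr c z + lieBr c x * y * lieBr a z = 0 := by
  have leibniz : ∀ x y : R, lieBr a x * lieBr c y + lieBr c x * lieBr a y = 0 := by
    intro x y
    have key : lieBr a x * lieBr c y + lieBr c x * lieBr a y =
        lieBr c (lieBr a (x * y)) - lieBr c (lieBr a x) * y - x * lieBr c (lieBr a y) := by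
      simp only [lieBr]; noncomm_ring
    rw [key, hc, hc, hc]; simp
  have key : lieBr a x * y * lieBr c z + lieBr c x * y * lieBr a z =
      (lieBr a x * lieBr c (y * z) + lieBr c x * lieBr a (y * z)) -
        (lieBr a x * lieBr c y + lieBr c x * lieBr a y) * z := by
    simp only [lieBr]; noncomm_ring
  rw [key, leibniz, leibniz]; simp

theorem stmt12 {R : Type*} [Ring R]
    (hsemiprime : ∀ a : R, (∀ x : R, a * x * a = 0) → a = 0) (a b : R)
    (h : ∀ x : R, lieBr (lieBr a x) (lieBr b x) = 0) :
    lieBr a b ∈ Set.center R := by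
  have hca : ∀ x : R, lieBr (lieBr a b) (lieBr a x) = 0 := by
    intro x
    have key : lieBr (lieBr a b) (lieBr a x) =
        lieBr (lieBr a (x + a)) (lieBr b (x + a)) - lieBr (lieBr a x) (lieBr b x) := by
      simp only [lieBr]; noncomm_ring
    rw [key, h, h, sub_zero]
  have hcb : ∀ x : R, lieBr (lieBr a b) (lieBr b x) = 0 := by
    intro x
    have key : lieBr (lieBr a b) (lieBr b x) =
        lieBr (lieBr a (x + b)) (lieBr b (x + b)) - lieBr (lieBr a x) (lieBr b x) := by
      simp only [lieBr]; noncomm_ring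
    rw [key, h, h, sub_zero]
  have jacobi : ∀ x : R,
      lieBr (lieBr a b) x = lieBr a (lieBr b x) - lieBr b (lieBr a x) := by
    intro x
    simp only [lieBr]; noncomm_ring
  have hzero : ∀ x : R, lieBr (lieBr a b) x = 0 := by
    intro x
    refine hsemiprime _ fun y => ?_
    have h1 := lieBr_mul_mul_lieBr hca x y (lieBr b x)
    have h2 := lieBr_mul_mul_lieBr hcb x y (lieBr a x)
    rw [hcb, mul_zero, zero_add] at h1
    rw [hca, mul_zero, zero_add] at h2
    calc lieBr (lieBr a b) x * y * lieBr (lieBr a b) x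
        = lieBr (lieBr a b) x * y * (lieBr a (lieBr b x) - lieBr b (lieBr a x)) :=
          congrArg _ (jacobi x)
      _ = 0 := by rw [mul_sub, h1, h2, sub_zero]
  exact Semigroup.mem_center_iff.mpr fun x => (sub_eq_zero.mp (hzero x)).symm
end

section
/- Let R be a ring and a, b ∈ R such that [[a,x],[b,x]] = 0 for all x ∈ R and [a,b] ∈ Z(R). Then [a,b]³ = 0. -/
theorem stmt13 {R : Type*} [Ring R] (a b : R)
    (h : ∀ x : R, lieBr (lieBr a x) (lieBr b x) = 0)
    (hz : lieBr a b ∈ Set.center R) :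
    lieBr a b ^ 3 = 0 := by
  -- With `c = [a, b]` central, the hypothesis at `x = a * b` reads `[a * c, -(c * b)] = 0`,
  -- and the left-hand side is `-c ^ 3`.
  have hx := h (a * b)
  have hc : ∀ y, lieBr a b * y = y * lieBr a b := fun y => (Set.mem_center_iff.1 hz).comm y
  have h1 : lieBr a (a * b) = a * lieBr a b := by simp only [lieBr]; noncomm_ring
  have h2 : lieBr b (a * b) = -(lieBr a b * b) := by simp only [lieBr]; noncomm_ring
  rw [h1, h2] at hx
  have hcab : a * b - b * a = lieBr a b := rfl
  generalize lieBr a b = c at *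
  have e1 : a * c * (c * b) = c * c * (a * b) := by
    rw [← hc a, mul_assoc, ← mul_assoc a, ← hc a]; simp only [mul_assoc]
  have e2 : c * b * (a * c) = c * c * (b * a) := by
    rw [← hc a, mul_assoc, ← mul_assoc b, ← hc b]; simp only [mul_assoc]
  have e3 : c ^ 3 = c * c * (a * b) - c * c * (b * a) := by
    rw [← mul_sub, hcab, pow_succ, pow_two]
  simp only [lieBr, mul_neg, neg_mul, e1, e2] at hx
  rw [e3, ← neg_eq_zero, ← hx]
  abel
end

section
/- Let R be a semiprime ring and a, b ∈ R such that [[a,x],[b,x]] = 0 for all x ∈ R. Then [a,x]·[b,[b,y]] + [b,x]·[[a,y],b] = 0 for all x, y ∈ R. -/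
section

variable {R : Type*} [Ring R]

theorem lieBr_linearized (a b : R) (h : ∀ x : R, lieBr (lieBr a x) (lieBr b x) = 0) (x y : R) :
    lieBr (lieBr a x) (lieBr b y) = lieBr (lieBr b x) (lieBr a y) := by
  have h1 := h (x + y)
  have h2 := h x
  have h3 := h y
  simp only [lieBr] at *
  linear_combination (norm := noncomm_ring) h1 - h2 - h3

/-- If `[u, y] v = 0` for all `y`, then also `[u, y] w v = 0` for all `w`: expand `[u, y w] v`. -/
theorem lieBr_mul_mul_eq_zero (u v : R) (h : ∀ y : R, lieBr u y * v = 0) (y w : R) :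
    lieBr u y * w * v = 0 := by
  have h1 := h (y * w)
  have h2 := h w
  simp only [lieBr] at *
  linear_combination (norm := noncomm_ring) h1 - y * h2

theorem lieBr_product_rule (b c : R) (h : ∀ y : R, lieBr c (lieBr b y) = 0) (y z : R) :
    lieBr c y * lieBr b z + lieBr b y * lieBr c z = 0 := by
  have h1 := h (y * z)
  have h2 := h y
  have h3 := h z
  simp only [lieBr] at *
  linear_combination (norm := noncomm_ring) h1 - h2 * z - y * h3

/-- In a semiprime ring, an element commuting with all of `[b, R]` commutes with `b`. -/
theorem lieBr_eq_zero_of_comm (hsemiprime : ∀ a : R, (∀ x : R, a * x * a = 0) → a = 0) (b c : R)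
    (h : ∀ y : R, lieBr c (lieBr b y) = 0) : lieBr b c = 0 := by
  have h1 : ∀ y, lieBr b y * lieBr b c = 0 := fun y => by
    have h2 := lieBr_product_rule b c h y b
    simp only [lieBr] at *
    linear_combination (norm := noncomm_ring) -h2
  exact hsemiprime _ fun w => lieBr_mul_mul_eq_zero _ _ h1 c w

theorem eq_zero_of_central_of_cube (hsemiprime : ∀ a : R, (∀ x : R, a * x * a = 0) → a = 0)
    (c : R) (hc : ∀ y : R, lieBr c y = 0) (h3 : c * c * c = 0) : c = 0 := by
  have hc' : ∀ y : R, c * y = y * c := fun y => sub_eq_zero.mp (hc y)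
  have h2 : c * c = 0 := hsemiprime _ fun x => by
    calc c * c * x * (c * c) = c * (c * x) * (c * c) := by noncomm_ring
      _ = c * (x * c) * (c * c) := by rw [hc' x]
      _ = c * x * (c * c * c) := by noncomm_ring
      _ = 0 := by rw [h3, mul_zero]
  exact hsemiprime _ fun x => by rw [hc' x, mul_assoc, h2, mul_zero]

theorem lieBr_eq_zero
    (hsemiprime : ∀ a : R, (∀ x : R, a * x * a = 0) → a = 0) (a b : R)
    (h : ∀ x : R, lieBr (lieBr a x) (lieBr b x) = 0) : lieBr a b = 0 := by
  obtain ⟨c, hc⟩ : ∃ c, c = lieBr a b := ⟨_, rfl⟩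
  rw [← hc]
  have hb : ∀ y, lieBr c (lieBr b y) = 0 := fun y => by
    have h1 := lieBr_linearized a b h b y
    rw [← hc] at h1
    rw [h1]
    simp [lieBr]
  have ha : ∀ y, lieBr c (lieBr a y) = 0 := fun y => by
    have h1 := lieBr_linearized a b h a y
    rw [hc]
    simp only [lieBr] at *
    linear_combination (norm := noncomm_ring) h1
  have hac : lieBr a c = 0 := lieBr_eq_zero_of_comm hsemiprime a c ha
  -- The product rule at `z = a`, where `[b, a] = -c` and `[c, a] = 0`, gives `[c, y] c = 0`.
  have hyc : ∀ y, lieBr c y * c = 0 := fun y => by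
    have h1 := lieBr_product_rule b c hb y a
    have h2 : lieBr b a = -c := by rw [hc]; simp [lieBr]
    have h3 : lieBr c a = 0 := by rw [← neg_eq_zero, ← hac]; simp [lieBr]
    rw [h2, h3] at h1
    simpa using h1
  have hcent : ∀ y, lieBr c y = 0 := fun y => hsemiprime _ fun w => by
    have h1 := lieBr_mul_mul_eq_zero c c hyc y w
    have h2 := lieBr_mul_mul_eq_zero c c hyc y (w * y)
    have h3 : lieBr c y * w * lieBr c y = lieBr c y * w * c * y - lieBr c y * (w * y) * c := by
      simp only [lieBr]; noncomm_ring
    rw [h3, h1, h2]; simp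
  refine eq_zero_of_central_of_cube hsemiprime c hcent ?_
  -- Here `[a, a * b] = a * c` and `[b, a * b] = -c * b`, whose commutator is `-c³`.
  have h1 := h (a * b)
  have h2 : lieBr a (a * b) = a * c := by rw [hc]; simp only [lieBr]; noncomm_ring
  have h3 : lieBr b (a * b) = -(c * b) := by rw [hc]; simp only [lieBr]; noncomm_ring
  have h4 : a * c = c * a := (sub_eq_zero.mp (hcent a)).symm
  have h5 : b * c = c * b := (sub_eq_zero.mp (hcent b)).symm
  have h6 : c = a * b - b * a := hc
  rw [h2, h3, h4] at h1
  simp only [lieBr] at h1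
  calc c * c * c = c * c * (a * b - b * a) := by rw [← h6]
    _ = -(c * a * -(c * b) - -(c * b) * (c * a)) := by
      linear_combination (norm := noncomm_ring) -c * h4 * b + c * h5 * a
    _ = 0 := by rw [h1, neg_zero]

end

theorem stmt14 {R : Type*} [Ring R]
    (hsemiprime : ∀ a : R, (∀ x : R, a * x * a = 0) → a = 0) (a b : R)
    (h : ∀ x : R, lieBr (lieBr a x) (lieBr b x) = 0) :
    ∀ x y : R, lieBr a x * lieBr b (lieBr b y) + lieBr b x * lieBr (lieBr a y) b = 0 := by
  intro x y
  have hc := lieBr_eq_zero hsemiprime a b h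
  -- The linearized identity at the product `x * b`, with its Leibniz terms cancelled.
  have h1 := lieBr_linearized a b h y (x * b)
  have h2 := lieBr_linearized a b h y x
  have h3 := lieBr_linearized a b h y b
  simp only [lieBr] at *
  linear_combination (norm := noncomm_ring) h1 - h2 * b - x * h3 +
    ((b * y - y * b) * x - x * (b * y - y * b)) * hc
end

section
/- Let R be a semiprime ring and a, b ∈ R such that [[a,x],[b,x]] = 0 for all x ∈ R. Then [a,x]·z·[b,[b,y]] + [b,x]·z·[[a,y],b] = 0 for all x, y, z ∈ R. -/
theorem lieBr_polarized {R : Type*} [Ring R] {a b : R}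
    (h : ∀ x : R, lieBr (lieBr a x) (lieBr b x) = 0) (x y : R) :
    lieBr (lieBr a x) (lieBr b y) - lieBr (lieBr b x) (lieBr a y) = 0 := by
  have h₁ := h (x + y)
  have h₂ := h x
  have h₃ := h y
  simp only [lieBr] at *
  linear_combination (norm := noncomm_ring) h₁ - h₂ - h₃

theorem lieBr_four {R : Type*} [Ring R] {a b : R}
    (h : ∀ x : R, lieBr (lieBr a x) (lieBr b x) = 0) (x y z w : R) :
    lieBr b y * z * lieBr (lieBr a x) w + lieBr (lieBr a x) y * z * lieBr b w
      - lieBr a y * z * lieBr (lieBr b x) w - lieBr (lieBr b x) y * z * lieBr a w = 0 := by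
  -- The part of the polarized identity in its second variable that fails the Leibniz rule.
  have leibniz (y z : R) : lieBr b y * lieBr (lieBr a x) z + lieBr (lieBr a x) y * lieBr b z
      - lieBr a y * lieBr (lieBr b x) z - lieBr (lieBr b x) y * lieBr a z = 0 := by
    have h₁ := lieBr_polarized h x (y * z)
    have h₂ := lieBr_polarized h x y
    have h₃ := lieBr_polarized h x z
    generalize hp : lieBr a x = p at *
    generalize hq : lieBr b x = q at *
    simp only [lieBr] at h₁ h₂ h₃ ⊢
    linear_combination (norm := noncomm_ring) h₁ - h₂ * z - y * h₃
  have h₁ := leibniz y (z * w)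
  have h₂ := leibniz y z
  generalize hp : lieBr a x = p at *
  generalize hq : lieBr b x = q at *
  simp only [lieBr] at h₁ h₂ ⊢
  linear_combination (norm := noncomm_ring) h₁ - h₂ * w

theorem lieBr_eq_zero_of_semiprime {R : Type*} [Ring R]
    (hsemiprime : ∀ a : R, (∀ x : R, a * x * a = 0) → a = 0) {a b : R}
    (h : ∀ x : R, lieBr (lieBr a x) (lieBr b x) = 0) : lieBr a b = 0 := by
  have hab : lieBr b a = -lieBr a b := by simp only [lieBr]; noncomm_ring
  have haa : lieBr a a = 0 := by simp [lieBr]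
  have hbb : lieBr b b = 0 := by simp [lieBr]
  have h0 (t : R) : lieBr 0 t = 0 := by simp [lieBr]
  have hpoly := h (a * b)
  have hda : lieBr a (a * b) = a * lieBr a b := by simp only [lieBr]; noncomm_ring
  have hgb : lieBr b (a * b) = -(lieBr a b * b) := by simp only [lieBr]; noncomm_ring
  have hc : a * b - b * a = lieBr a b := rfl
  rw [hda, hgb] at hpoly
  have haaa := lieBr_four h a a
  have hbab := lieBr_four h b a
  simp only [haa, hbb, hab, h0] at haaa hbab
  generalize lieBr a b = c at *
  have hca : lieBr c a = 0 := by
    refine hsemiprime _ fun z => ?_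
    have := haaa z c
    simp only [lieBr] at this ⊢
    linear_combination (norm := noncomm_ring) -this
  have hcw (z w : R) : c * z * lieBr c w = 0 := by
    have := hbab z w
    simp only [hca] at this
    linear_combination (norm := noncomm_ring) -this
  have hcentral (w : R) : c * w = w * c := by
    refine sub_eq_zero.mp (hsemiprime (c * w - w * c) fun z => ?_)
    have h₁ := hcw (w * z) w
    have h₂ := hcw z w
    simp only [lieBr] at h₁ h₂
    linear_combination (norm := noncomm_ring) h₁ - w * h₂
  have hcube : c * c * c = 0 := by
    have h₁ : lieBr (a * c) (-(c * b)) = -(c * c * (a * b - b * a)) := by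
      simp only [lieBr]
      have h₂ : a * c * (-(c * b)) = -(c * c * (a * b)) := by
        simp only [← hcentral a, mul_neg, mul_assoc]
        rw [← mul_assoc a c b, ← hcentral a, mul_assoc]
      have h₃ : -(c * b) * (a * c) = -(c * c * (b * a)) := by
        simp only [← hcentral a, neg_mul, mul_assoc]
        rw [← mul_assoc b c a, ← hcentral b, mul_assoc]
      rw [h₂, h₃]
      noncomm_ring
    rw [h₁, hc, neg_eq_zero] at hpoly
    exact hpoly
  have hsq : c * c = 0 := by
    refine hsemiprime _ fun z => ?_
    rw [mul_assoc (c * c), ← mul_assoc z, ← hcentral z]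
    linear_combination (norm := noncomm_ring) hcube * (z * c)
  refine hsemiprime _ fun z => ?_
  rw [mul_assoc, ← hcentral z, ← mul_assoc, hsq, zero_mul]

theorem stmt15 {R : Type*} [Ring R]
    (hsemiprime : ∀ a : R, (∀ x : R, a * x * a = 0) → a = 0) (a b : R)
    (h : ∀ x : R, lieBr (lieBr a x) (lieBr b x) = 0) :
    ∀ x y z : R,
      lieBr a x * z * lieBr b (lieBr b y) + lieBr b x * z * lieBr (lieBr a y) b = 0 := by
  intro x y z
  have h₁ := lieBr_four h y x z b
  have hbb : lieBr b b = 0 := by simp [lieBr]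
  have hswap : lieBr b (lieBr b y) = -lieBr (lieBr b y) b := by
    simp only [lieBr]; noncomm_ring
  rw [lieBr_eq_zero_of_semiprime hsemiprime h, hbb] at h₁
  rw [hswap]
  linear_combination (norm := noncomm_ring) h₁
end
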